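/- Let ℓ ≥ 2, let t ≥ 2, and let H be the 2×3 (0,1)-matrix with rows [0 1 0] and [0 0 1]. Then forb(m, 3, (𝒯_ℓ(3) \ 𝒯_ℓ(2)) ∪ {t·H}) is Θ(m²): there exist constants c₁, c₂ > 0 such that for all m ≥ 1, c₁ · m² ≤ forb(m, 3, (𝒯_ℓ(3) \ 𝒯_ℓ(2)) ∪ {t·H}) ≤ c₂ · m². -/

import Mathlib

/-- A matrix with natural number entries, of size `k × p`. -/
abbrev MatN (k p : ℕ) := Matrix (Fin k) (Fin p) ℕ

/-- A matrix bundled with its dimensions. -/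
structure CMat where
  rows : ℕ
  cols : ℕ
  mat : MatN rows cols

/-- A matrix is simple if no two of its columns are equal. -/
def SimpleM {m n : ℕ} (A : MatN m n) : Prop :=
  ∀ j₁ j₂ : Fin n, (∀ i, A i j₁ = A i j₂) → j₁ = j₂

/-- An `r`-matrix: all entries lie in `{0, 1, …, r-1}`. -/
def RMat (r : ℕ) {m n : ℕ} (A : MatN m n) : Prop := ∀ i j, A i j < r

/-- `F` is a configuration of `A` (written `F ≺ A`): some submatrix of `A` is a row
and column permutation of `F`; equivalently there are injections of the rows and
columns of `F` into those of `A` realizing the entries of `F`. -/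
def IsConfig {k p m n : ℕ} (F : MatN k p) (A : MatN m n) : Prop :=
  ∃ f : Fin k → Fin m, ∃ g : Fin p → Fin n,
    Function.Injective f ∧ Function.Injective g ∧ ∀ i j, A (f i) (g j) = F i j

/-- `A` avoids every matrix of the family `𝓕` as a configuration. -/
def AvoidsFam {m n : ℕ} (A : MatN m n) (𝓕 : Set CMat) : Prop :=
  ∀ F ∈ 𝓕, ¬ IsConfig F.mat A

/-- `forb m r 𝓕`: the maximum number of columns of an `m`-rowed simple `r`-matrix
having no member of `𝓕` as a configuration. -/
noncomputable def forb (m r : ℕ) (𝓕 : Set CMat) : ℕ :=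
  sSup { n : ℕ | ∃ A : MatN m n, RMat r A ∧ SimpleM A ∧ AvoidsFam A 𝓕 }

/-- `forbmax m r 𝓕`: the maximum of `forb m' r 𝓕` over `m' ≤ m`. -/
noncomputable def forbmax (m r : ℕ) (𝓕 : Set CMat) : ℕ :=
  sSup { x : ℕ | ∃ m' ≤ m, x = forb m' r 𝓕 }

/-- The number of 1's in column `j` of `A` (the column sum). -/
def colSum {m n : ℕ} (A : MatN m n) (j : Fin n) : ℕ :=
  (Finset.univ.filter (fun i => A i j = 1)).card

/-- `forbK k m r 𝓕`: as `forb`, but restricted to matrices all of whose columns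
have exactly `k` entries equal to 1. -/
noncomputable def forbK (k m r : ℕ) (𝓕 : Set CMat) : ℕ :=
  sSup { n : ℕ | ∃ A : MatN m n, RMat r A ∧ SimpleM A ∧ (∀ j, colSum A j = k) ∧
    AvoidsFam A 𝓕 }

/-- `forbmaxK k m r 𝓕`: the maximum of `forbK k m' r 𝓕` over `m' ≤ m`. -/
noncomputable def forbmaxK (k m r : ℕ) (𝓕 : Set CMat) : ℕ :=
  sSup { x : ℕ | ∃ m' ≤ m, x = forbK k m' r 𝓕 }

/-- `Imat ℓ a b`: the `ℓ × ℓ` matrix with `a` on the diagonal and `b` off the diagonal. -/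
def Imat (ℓ a b : ℕ) : MatN ℓ ℓ := fun i j => if i = j then a else b

/-- `Tmat ℓ a b`: the `ℓ × ℓ` matrix with `a` below the diagonal and `b` on or above it. -/
def Tmat (ℓ a b : ℕ) : MatN ℓ ℓ := fun i j => if (j : ℕ) < (i : ℕ) then a else b

/-- `Tmat3 ℓ a b c`: the `ℓ × ℓ` matrix with `a` below, `b` on, and `c` above the diagonal. -/
def Tmat3 (ℓ a b c : ℕ) : MatN ℓ ℓ :=
  fun i j => if (j : ℕ) < (i : ℕ) then a else if i = j then b else c

/-- The family `𝒯_ℓ(r)` of all `I_ℓ(a,b)` and `T_ℓ(a,b)` with `a,b ∈ {0,…,r-1}`, `a ≠ b`. -/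
def TFam (ℓ r : ℕ) : Set CMat :=
  { M | ∃ a b : ℕ, a < r ∧ b < r ∧ a ≠ b ∧
      (M = ⟨ℓ, ℓ, Imat ℓ a b⟩ ∨ M = ⟨ℓ, ℓ, Tmat ℓ a b⟩) }

/-- `t·F`: the concatenation of `t` copies of `F` side by side. -/
def tcopies {k p : ℕ} (t : ℕ) (F : MatN k p) : MatN k (t * p) :=
  fun i j => F i ⟨(j : ℕ) % p, Nat.mod_lt _ (by
    rcases Nat.eq_zero_or_pos p with h | h
    · exact absurd j.isLt (by simp [h])
    · exact h)⟩

/-- `0×1×F`: `F` with an extra row of 0's and an extra row of 1's appended. -/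
def zeroOneTop {k p : ℕ} (F : MatN k p) : MatN (k + 2) p :=
  fun i j => if h : (i : ℕ) < k then F ⟨i, h⟩ j else if (i : ℕ) = k then 0 else 1

/-- `F_{a,b,c,d}`: the `(a+b+c+d) × 2` matrix with `a` rows `[1 1]`, `b` rows `[1 0]`,
`c` rows `[0 1]` and `d` rows `[0 0]`. -/
def Fabcd (a b c d : ℕ) : MatN (a + b + c + d) 2 :=
  fun i j =>
    if (i : ℕ) < a then 1
    else if (i : ℕ) < a + b then (if (j : ℕ) = 0 then 1 else 0)
    else if (i : ℕ) < a + b + c then (if (j : ℕ) = 0 then 0 else 1)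
    else 0

/-! Bounded core: among many distinct columns one finds rows and columns, each row paired with a
column, such that every later column differs in that row from the paired one; Ramsey's theorem
makes this square pattern constant below, on and above the diagonal, and it then contains some
`I_ℓ(a,b)` or `T_ℓ(a,b)`. So `forb(m, r, 𝒯_ℓ(r))` is bounded, and hence so is the number of columns
on any block no row of which contains both `0` and `1`, because the members of `𝒯_ℓ(2)` do have
such a row.

Linear bound for `H`: say that row `i` dominates row `j` if no column has `0` in row `i` and `1` in
row `j`. Avoiding `H` means that of two rows vanishing in a common column, one dominates the other,
so the zero rows of every column contain a king, which dominates each of them in at most two steps.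
The columns with a given king split into boundedly many traces on the rows dominated by the king,
and each trace is shared by boundedly many columns. Each of the `m` rows is thus the king of
boundedly many columns.

Passing from `H` to `t·H` costs at most `t m²` further columns. Conversely, the `(0,1)`-columns with
one or two zeros avoid `2·H`, since two given rows vanish together in a single column. -/

open Finset Function

universe u

section Ramsey

lemma exists_endHomogeneous (κ : Type*) [Finite κ] (n : ℕ) :
    ∃ N : ℕ, ∀ {α : Type u} [LinearOrder α] (S : Finset α), N ≤ #S → ∀ f : α → α → κ,
      ∃ T ⊆ S, #T = n ∧ ∃ g : α → κ, ∀ p ∈ T, ∀ q ∈ T, p < q → f p q = g p := by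
  classical
  have := Fintype.ofFinite κ
  induction n with
  | zero => exact ⟨0, fun S _ f => ⟨∅, empty_subset S, card_empty, fun p => f p p, by simp⟩⟩
  | succ n ih =>
    obtain ⟨N, hN⟩ := ih
    refine ⟨Fintype.card κ * N + 1, fun {α} _ S hS f => ?_⟩
    have hne : S.Nonempty := card_pos.1 (by omega)
    set x := S.min' hne
    have hxS : x ∈ S := S.min'_mem hne
    have hcard : Fintype.card κ * N ≤ #(S.erase x) := by rw [card_erase_of_mem hxS]; omega
    obtain ⟨k, -, hk⟩ := exists_le_card_fiber_of_mul_le_card_of_maps_to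
      (f := f x) (fun _ _ => mem_univ _) ⟨f x x, mem_univ _⟩ hcard
    obtain ⟨T, hTS, hTcard, g, hg⟩ := hN _ hk f
    have hT : ∀ y ∈ T, x < y ∧ y ∈ S ∧ f x y = k := fun y hy => by
      obtain ⟨hyS, hyk⟩ := mem_filter.1 (hTS hy)
      exact ⟨S.min'_lt_of_mem_erase_min' hne hyS, mem_of_mem_erase hyS, hyk⟩
    have hxT : x ∉ T := fun h => (hT x h).1.false
    refine ⟨insert x T, insert_subset hxS fun y hy => (hT y hy).2.1,
      by rw [card_insert_of_notMem hxT, hTcard], update g x k, fun p hp q hq hpq => ?_⟩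
    rcases mem_insert.1 hp with rfl | hp
    · have hqT : q ∈ T := mem_of_mem_insert_of_ne hq hpq.ne'
      rw [update_self, (hT q hqT).2.2]
    · have hqT : q ∈ T := mem_of_mem_insert_of_ne hq ((hT p hp).1.trans hpq).ne'
      rw [update_of_ne (hT p hp).1.ne', hg p hp q hqT hpq]

theorem exists_ramsey (κ : Type*) [Finite κ] (n : ℕ) :
    ∃ N : ℕ, ∀ {α : Type u} [LinearOrder α] (S : Finset α), N ≤ #S → ∀ f : α → α → κ,
      ∃ T ⊆ S, #T = n ∧ ∃ k : κ, ∀ p ∈ T, ∀ q ∈ T, p < q → f p q = k := by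
  classical
  have := Fintype.ofFinite κ
  obtain ⟨N, hN⟩ := exists_endHomogeneous κ (Fintype.card κ * n + 1)
  refine ⟨N, fun S hS f => ?_⟩
  obtain ⟨T, hTS, hTcard, g, hg⟩ := hN S hS f
  obtain ⟨x, -⟩ : T.Nonempty := card_pos.1 (by omega)
  obtain ⟨k, -, hk⟩ := exists_le_card_fiber_of_mul_le_card_of_maps_to (s := T) (n := n)
    (fun p _ => mem_univ (g p)) ⟨g x, mem_univ _⟩ (by rw [card_univ]; omega)
  obtain ⟨T', hT', hT'card⟩ := exists_subset_card_eq hk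
  have hmem : ∀ p ∈ T', p ∈ T ∧ g p = k := fun p hp => mem_filter.1 (hT' hp)
  exact ⟨T', fun p hp => hTS (hmem p hp).1, hT'card, k, fun p hp q hq hpq => by
    rw [hg p (hmem p hp).1 q (hmem q hq).1 hpq, (hmem p hp).2]⟩

lemma exists_splitting {ι β γ : Type*} (A : Matrix ι β γ) (k : ℕ) (B : Finset β)
    (hB : 2 ^ k ≤ #B) (hinj : Set.InjOn A.transpose B) :
    ∃ (x : Fin k → ι) (c : Fin k → β), (∀ p, c p ∈ B) ∧
      ∀ p q, p < q → A (x p) (c q) ≠ A (x p) (c p) := by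
  classical
  induction k generalizing B with
  | zero => exact ⟨Fin.elim0, Fin.elim0, fun p => p.elim0, fun p => p.elim0⟩
  | succ k ih =>
    rw [pow_succ] at hB
    have hpos : 0 < 2 ^ k := by positivity
    obtain ⟨c, hc, d, hd, hcd⟩ := one_lt_card.1 (by omega : 1 < #B)
    obtain ⟨i, hi⟩ := Function.ne_iff.1 (hinj.ne hc hd hcd)
    -- Row `i` takes different values at `c` and `d`, so half of `B` differs there from one of them.
    obtain ⟨e, he, B', hB'B, hB', hne⟩ : ∃ e ∈ B, ∃ B' ⊆ B, 2 ^ k ≤ #B' ∧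
        ∀ y ∈ B', A i y ≠ A i e := by
      by_cases hbig : 2 ^ k ≤ #{y ∈ B | A i y = A i c}
      · refine ⟨d, hd, _, filter_subset _ B, hbig, fun y hy => ?_⟩
        rw [(mem_filter.1 hy).2]
        exact hi
      · have := card_filter_add_card_filter_not (s := B) (fun y => A i y = A i c)
        exact ⟨c, hc, {y ∈ B | ¬A i y = A i c}, filter_subset _ B, by omega,
          fun y hy => (mem_filter.1 hy).2⟩
    obtain ⟨x, g, hgB', hxg⟩ := ih B' hB' (hinj.mono (coe_subset.2 hB'B))
    refine ⟨Fin.cons i x, Fin.cons e g, Fin.cases he fun p => hB'B (hgB' p), fun p q hpq => ?_⟩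
    obtain ⟨q, rfl⟩ := Fin.exists_succ_eq.2 (Fin.ne_zero_of_lt hpq)
    induction p using Fin.cases with
    | zero => exact hne _ (hgB' q)
    | succ p => exact hxg p q (Fin.succ_lt_succ_iff.1 hpq)

end Ramsey

section Configurations

variable {m n k p r s : ℕ}

lemma RMat.mono {A : MatN m n} (hA : RMat r A) (hrs : r ≤ s) : RMat s A :=
  fun i j => (hA i j).trans_le hrs

lemma RMat.submatrix {A : MatN m n} (hA : RMat r A) (f : Fin k → Fin m) (g : Fin p → Fin n) :
    RMat r (A.submatrix f g) :=
  fun i j => hA (f i) (g j)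

lemma SimpleM.injective {A : MatN m n} (hA : SimpleM A) : Injective A.transpose :=
  fun c d hcd => hA c d (congrFun hcd)

lemma IsConfig.trans {a b : ℕ} {F : MatN a b} {G : MatN k p} {A : MatN m n}
    (hFG : IsConfig F G) (hGA : IsConfig G A) : IsConfig F A := by
  obtain ⟨f, g, hf, hg, hfg⟩ := hFG
  obtain ⟨f', g', hf', hg', hfg'⟩ := hGA
  exact ⟨f' ∘ f, g' ∘ g, hf'.comp hf, hg'.comp hg, fun i j => (hfg' _ _).trans (hfg i j)⟩

lemma isConfig_submatrix (A : MatN m n) {f : Fin k → Fin m} {g : Fin p → Fin n}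
    (hf : Injective f) (hg : Injective g) : IsConfig (A.submatrix f g) A :=
  ⟨f, g, hf, hg, fun _ _ => rfl⟩

lemma AvoidsFam.of_isConfig {A : MatN m n} {G : MatN k p} {𝓕 : Set CMat} (hA : AvoidsFam A 𝓕)
    (hG : IsConfig G A) : AvoidsFam G 𝓕 :=
  fun F hF hFG => hA F hF (hFG.trans hG)

lemma AvoidsFam.mono {A : MatN m n} {𝓕 𝓖 : Set CMat} (hA : AvoidsFam A 𝓖) (h : 𝓕 ⊆ 𝓖) :
    AvoidsFam A 𝓕 :=
  fun F hF => hA F (h hF)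

lemma isConfig_of_submatrix_eq {F : MatN k p} {A : MatN m n} (hrow : Injective F)
    (hcol : SimpleM F) {f : Fin k → Fin m} {g : Fin p → Fin n} (h : A.submatrix f g = F) :
    IsConfig F A := by
  subst h
  refine isConfig_submatrix A (fun i i' hii => hrow ?_) (fun j j' hjj => hcol j j' fun i => ?_)
  · ext j
    simp only [Matrix.submatrix_apply, hii]
  · simp only [Matrix.submatrix_apply, hjj]

lemma isConfig_tcopies {t : ℕ} {F : MatN k p} (hF : SimpleM F) {A : MatN m n}
    {f : Fin k → Fin m} (hf : Injective f)
    (h : ∀ s, t ≤ #{c | ∀ i, A (f i) c = F i s}) : IsConfig (tcopies t F) A := by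
  choose T hT hTcard using fun s => exists_subset_card_eq (h s)
  let e (s : Fin p) : Fin t ↪o Fin n := (T s).orderEmbOfFin (hTcard s)
  have he : ∀ s u i, A (f i) (e s u) = F i s := fun s u =>
    (mem_filter.1 (hT s ((T s).orderEmbOfFin_mem (hTcard s) u))).2
  refine ⟨f, fun j => e j.modNat j.divNat, hf, fun j j' hjj => ?_, fun i j => he _ _ i⟩
  have hmod : j.modNat = j'.modNat := hF _ _ fun i => by
    rw [← he j.modNat j.divNat i, ← he j'.modNat j'.divNat i]
    exact congrArg (A (f i)) hjj
  have hdiv : j.divNat = j'.divNat := (e j'.modNat).injective (by simpa only [hmod] using hjj)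
  exact finProdFinEquiv.symm.injective (Prod.ext hdiv hmod)

end Configurations

section Forb

variable {m n r : ℕ} {𝓕 : Set CMat}

lemma SimpleM.card_le_pow {A : MatN m n} (hA : SimpleM A) (hr : RMat r A) : n ≤ r ^ m := by
  have hinj : Injective fun (j : Fin n) (i : Fin m) => (⟨A i j, hr i j⟩ : Fin r) :=
    fun c d hcd => hA c d fun i => congrArg Fin.val (congrFun hcd i)
  simpa using Fintype.card_le_of_injective _ hinj

lemma le_forb {A : MatN m n} (hr : RMat r A) (hA : SimpleM A) (h : AvoidsFam A 𝓕) :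
    n ≤ forb m r 𝓕 :=
  le_csSup ⟨r ^ m, fun _ ⟨_, hr', hA', _⟩ => hA'.card_le_pow hr'⟩ ⟨A, hr, hA, h⟩

lemma forb_le {b : ℕ}
    (h : ∀ n, ∀ A : MatN m n, RMat r A → SimpleM A → AvoidsFam A 𝓕 → n ≤ b) :
    forb m r 𝓕 ≤ b :=
  csSup_le' fun n ⟨A, hr, hA, hav⟩ => h n A hr hA hav

/- A `k`-tuple of rows of a matrix avoiding `t·F` shows some column of `F` fewer than `t` times;
deleting these columns for each of the at most `m ^ k` tuples leaves a matrix avoiding `F`. -/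
theorem forb_tcopies_le {k p : ℕ} (m r t : ℕ) {F : MatN k p} (hF : SimpleM F) (𝓕 : Set CMat) :
    forb m r (𝓕 ∪ {⟨k, t * p, tcopies t F⟩}) ≤ forb m r (𝓕 ∪ {⟨k, p, F⟩}) + m ^ k * t := by
  classical
  refine forb_le fun n A hr hA hav => ?_
  have hsparse : ∀ f : Fin k → Fin m, ∃ D : Finset (Fin n), #D ≤ t ∧
      (Injective f → ∃ s, ∀ c, (∀ i, A (f i) c = F i s) → c ∈ D) := by
    intro f
    by_cases hf : Injective f
    · have hnot := mt (isConfig_tcopies (t := t) hF hf) (hav _ (Or.inr rfl))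
      push Not at hnot
      obtain ⟨s, hs⟩ := hnot
      exact ⟨_, hs.le, fun _ => ⟨s, fun c hc => by simpa using hc⟩⟩
    · exact ⟨∅, by simp, fun h => absurd h hf⟩
  choose D hDcard hD using hsparse
  set U := univ.biUnion D
  have hU : #U ≤ m ^ k * t := by
    simpa using card_biUnion_le_card_mul univ D t fun f _ => hDcard f
  let g : Fin #Uᶜ ↪o Fin n := Uᶜ.orderEmbOfFin rfl
  have hg : IsConfig (A.submatrix id g) A := isConfig_submatrix A injective_id g.injective
  have hle : #Uᶜ ≤ forb m r (𝓕 ∪ {⟨k, p, F⟩}) := by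
    refine le_forb (A := A.submatrix id g) (hr.submatrix id g)
      (fun c d hcd => g.injective (hA _ _ hcd)) ?_
    rintro M (hM | rfl)
    · exact (hav.mono Set.subset_union_left).of_isConfig hg M hM
    · rintro ⟨f, h, hf, -, hfh⟩
      obtain ⟨s, hs⟩ := hD f hf
      refine mem_compl.1 (Uᶜ.orderEmbOfFin_mem rfl (h s)) ?_
      exact mem_biUnion.2 ⟨f, mem_univ f, hs _ fun i => hfh i s⟩
  have htotal := card_compl_add_card U
  rw [Fintype.card_fin] at htotal
  omega

end Forb
section AnsteeLu

variable {n r ℓ a b c : ℕ}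

lemma injective_tmat3 (hbc : b ≠ c) : Injective (Tmat3 n a b c) := by
  intro i i' h
  by_contra hne
  wlog hlt : i < i' generalizing i i'
  · exact this h.symm (Ne.symm hne) (lt_of_le_of_ne (not_lt.1 hlt) (Ne.symm hne))
  exact hbc (by simpa [Tmat3, hne, hlt.not_gt] using (congrFun h i').symm)

lemma simpleM_tmat3 (hbc : b ≠ c) : SimpleM (Tmat3 n a b c) := by
  intro j j' h
  by_contra hne
  wlog hlt : j < j' generalizing j j'
  · exact this j' j (fun i => (h i).symm) (Ne.symm hne)
      (lt_of_le_of_ne (not_lt.1 hlt) (Ne.symm hne))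
  exact hbc (by simpa [Tmat3, hne, hlt.not_gt] using h j)

lemma isConfig_tmat_tmat3 : IsConfig (Tmat ℓ a c) (Tmat3 (2 * ℓ) a b c) := by
  refine ⟨fun i => ⟨2 * i, by omega⟩, fun j => ⟨2 * j + 1, by omega⟩, fun i i' h => ?_,
    fun j j' h => ?_, fun i j => ?_⟩
  · simp only [Fin.mk.injEq] at h
    omega
  · simp only [Fin.mk.injEq] at h
    omega
  · simp only [Tmat3, Tmat, Fin.mk.injEq]
    split_ifs <;> first | rfl | omega

lemma isConfig_imat_tmat3 : IsConfig (Imat ℓ b a) (Tmat3 (2 * ℓ) a b a) := by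
  have hle : ℓ ≤ 2 * ℓ := by omega
  refine ⟨Fin.castLE hle, Fin.castLE hle, Fin.castLE_injective hle, Fin.castLE_injective hle,
    fun i j => ?_⟩
  simp only [Tmat3, Imat, Fin.val_castLE, Fin.ext_iff]
  split_ifs <;> first | rfl | omega

lemma exists_mem_TFam_isConfig_tmat3 (ha : a < r) (hb : b < r) (hc : c < r) (hbc : b ≠ c) :
    ∃ M ∈ TFam ℓ r, IsConfig M.mat (Tmat3 (2 * ℓ) a b c) := by
  rcases eq_or_ne a c with rfl | hac
  · exact ⟨_, ⟨b, a, hb, ha, hbc, Or.inl rfl⟩, isConfig_imat_tmat3⟩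
  · exact ⟨_, ⟨a, c, ha, hc, hac, Or.inr rfl⟩, isConfig_tmat_tmat3⟩

lemma exists_isConfig_tmat3 (r n : ℕ) :
    ∃ K : ℕ, ∀ (m k : ℕ) (A : MatN m k), RMat r A → SimpleM A → K ≤ k →
      ∃ a b c, a < r ∧ b < r ∧ c < r ∧ b ≠ c ∧ IsConfig (Tmat3 n a b c) A := by
  obtain ⟨N, hN⟩ := exists_ramsey (Fin r × Fin r × Fin r) (n + 2)
  refine ⟨2 ^ N, fun m k A hr hA hk => ?_⟩
  obtain ⟨x, d, -, hxd⟩ := exists_splitting A N univ (by simpa using hk) hA.injective.injOn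
  let entry (p q : Fin N) : Fin r := ⟨A (x p) (d q), hr _ _⟩
  obtain ⟨T, -, hT, ⟨a, b, c⟩, habc⟩ := hN univ (by simp) fun p q =>
    (entry q p, entry p p, entry p q)
  let e : Fin (n + 2) ↪o Fin N := T.orderEmbOfFin hT
  have he : ∀ i j, i < j →
      A (x (e j)) (d (e i)) = a ∧ A (x (e i)) (d (e i)) = b ∧ A (x (e i)) (d (e j)) = c := by
    intro i j hij
    have h := habc _ (T.orderEmbOfFin_mem hT i) _ (T.orderEmbOfFin_mem hT j)
      (e.strictMono hij)
    simp only [Prod.mk.injEq, Fin.ext_iff, entry] at h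
    exact h
  have hbc : (b : ℕ) ≠ c := by
    obtain ⟨-, hb, hc⟩ := he 0 1 Fin.zero_lt_one
    exact hb ▸ hc ▸ (hxd _ _ (e.strictMono Fin.zero_lt_one)).symm
  refine ⟨a, b, c, a.2, b.2, c.2, hbc, isConfig_of_submatrix_eq (injective_tmat3 hbc)
    (simpleM_tmat3 hbc) (f := fun i => x (e (i.castLE (by omega))))
    (g := fun j => d (e (j.castLE (by omega)))) ?_⟩
  ext i j
  rcases lt_trichotomy i j with hij | rfl | hij
  · simp [Tmat3, hij.ne, not_lt.2 (Fin.le_def.1 hij.le), (he (i.castLE _) (j.castLE _) hij).2.2]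
  · simp [Tmat3, (he (i.castLE (by omega)) (Fin.last _) (by simp [Fin.lt_def])).2.1]
  · simp [Tmat3, hij, (he (j.castLE _) (i.castLE _) hij).1]

theorem exists_forb_TFam_le (ℓ r : ℕ) : ∃ K : ℕ, ∀ m, forb m r (TFam ℓ r) ≤ K := by
  obtain ⟨K, hK⟩ := exists_isConfig_tmat3 r (2 * ℓ)
  refine ⟨K, fun m => forb_le fun n A hr hA hav => ?_⟩
  by_contra! hlt
  obtain ⟨a, b, c, ha, hb, hc, hbc, hconf⟩ := hK m n A hr hA hlt.le
  obtain ⟨M, hM, hMconf⟩ := exists_mem_TFam_isConfig_tmat3 ha hb hc hbc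
  exact hav M hM (hMconf.trans hconf)

end AnsteeLu

section Traces

variable {m n r ℓ : ℕ}

/-- The trace on the rows `X` of the column of `A` with index `c`. -/
def colTrace (A : MatN m n) (X : Finset (Fin m)) (c : Fin n) : X → ℕ := fun i => A i c

lemma SimpleM.injective_colTrace_univ {A : MatN m n} (hA : SimpleM A) :
    Injective (colTrace A univ) :=
  fun c d hcd => hA c d fun i => congrFun hcd ⟨i, mem_univ i⟩

/-- `A` has at most `K` column traces on every block of rows and columns none of whose rows
contains both a `0` and a `1`. -/
def BoundedTraces (K : ℕ) (A : MatN m n) : Prop :=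
  ∀ (X : Finset (Fin m)) (B : Finset (Fin n)),
    (∀ i ∈ X, ∀ c ∈ B, ∀ d ∈ B, A i c = 0 → A i d ≠ 1) → #(B.image (colTrace A X)) ≤ K

lemma BoundedTraces.card_le {K : ℕ} {A : MatN m n} (hK : BoundedTraces K A) (hA : SimpleM A)
    {B : Finset (Fin n)} (hB : ∀ i, ∀ c ∈ B, ∀ d ∈ B, A i c = 0 → A i d ≠ 1) : #B ≤ K := by
  rw [← card_image_of_injective B hA.injective_colTrace_univ]
  exact hK univ B fun i _ => hB i

lemma exists_row_of_eq_imat_or_tmat {M : CMat} {a b : ℕ} (hℓ : 2 ≤ ℓ)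
    (hM : M = ⟨ℓ, ℓ, Imat ℓ a b⟩ ∨ M = ⟨ℓ, ℓ, Tmat ℓ a b⟩) :
    ∃ i j j', M.mat i j = a ∧ M.mat i j' = b := by
  rcases hM with rfl | rfl
  · exact ⟨⟨1, hℓ⟩, ⟨1, hℓ⟩, ⟨0, by dsimp only; omega⟩, by simp [Imat], by simp [Imat]⟩
  · exact ⟨⟨1, hℓ⟩, ⟨0, by dsimp only; omega⟩, ⟨1, hℓ⟩, by simp [Tmat], by simp [Tmat]⟩

lemma exists_row_zero_one_of_mem_TFam_two {M : CMat} (hℓ : 2 ≤ ℓ) (hM : M ∈ TFam ℓ 2) :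
    ∃ i j j', M.mat i j = 0 ∧ M.mat i j' = 1 := by
  obtain ⟨a, b, ha, hb, hab, hM⟩ := hM
  obtain ⟨i, j, j', hj, hj'⟩ := exists_row_of_eq_imat_or_tmat hℓ hM
  rcases (show a = 0 ∧ b = 1 ∨ a = 1 ∧ b = 0 by omega) with ⟨rfl, rfl⟩ | ⟨rfl, rfl⟩
  · exact ⟨i, j, j', hj, hj'⟩
  · exact ⟨i, j', j, hj', hj⟩

lemma AvoidsFam.of_diff_TFam_two {A : MatN m n} (hℓ : 2 ≤ ℓ)
    (hA : AvoidsFam A (TFam ℓ r \ TFam ℓ 2)) (h01 : ∀ i c d, A i c = 0 → A i d ≠ 1) :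
    AvoidsFam A (TFam ℓ r) := by
  refine fun M hM hconf => hA M ⟨hM, fun hM₂ => ?_⟩ hconf
  obtain ⟨f, g, -, -, hfg⟩ := hconf
  obtain ⟨i, j, j', hj, hj'⟩ := exists_row_zero_one_of_mem_TFam_two hℓ hM₂
  exact h01 (f i) (g j) (g j') ((hfg i j).trans hj) ((hfg i j').trans hj')

theorem exists_boundedTraces (r : ℕ) (hℓ : 2 ≤ ℓ) :
    ∃ K : ℕ, ∀ (m n : ℕ) (A : MatN m n), RMat r A → AvoidsFam A (TFam ℓ r \ TFam ℓ 2) →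
      BoundedTraces K A := by
  classical
  obtain ⟨K, hK⟩ := exists_forb_TFam_le ℓ r
  refine ⟨K, fun m n A hr hav X B h01 => ?_⟩
  obtain ⟨B', hB'B, hinj, himage⟩ := exists_subset_injOn_image_eq_of_surjOn B
    (B.image (colTrace A X)) (by rw [coe_image]; exact Set.surjOn_image _ _)
  rw [← himage, card_image_of_injOn hinj]
  let f : Fin #X ↪o Fin m := X.orderEmbOfFin rfl
  let g : Fin #B' ↪o Fin n := B'.orderEmbOfFin rfl
  have hf : ∀ i, f i ∈ X := X.orderEmbOfFin_mem rfl
  have hg : ∀ j, g j ∈ B' := B'.orderEmbOfFin_mem rfl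
  have hsimple : SimpleM (A.submatrix f g) := by
    refine fun c d hcd => g.injective (hinj (hg c) (hg d) (funext fun ⟨i, hi⟩ => ?_))
    obtain ⟨u, rfl⟩ : i ∈ Set.range f := by simpa [f] using hi
    exact hcd u
  refine (le_forb (hr.submatrix f g) hsimple ?_).trans (hK #X)
  exact (hav.of_isConfig (isConfig_submatrix A f.injective g.injective)).of_diff_TFam_two hℓ
    fun i c d => h01 (f i) (hf i) (g c) (hB'B (hg c)) (g d) (hB'B (hg d))

end Traces

lemma exists_king {α : Type*} {Z : Finset α} (hZ : Z.Nonempty) {R : α → α → Prop}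
    (hR : ∀ i ∈ Z, ∀ j ∈ Z, R i j ∨ R j i) :
    ∃ i ∈ Z, ∀ j ∈ Z, ∃ y ∈ Z, R i y ∧ R y j := by
  classical
  have hrefl : ∀ i ∈ Z, R i i := fun i hi => or_self_iff.1 (hR i hi i hi)
  obtain ⟨i, hi, hmax⟩ := exists_max_image Z (fun i => #{y ∈ Z | R i y}) hZ
  refine ⟨i, hi, fun j hj => ?_⟩
  by_contra! hno
  refine (hmax j hj).not_gt (card_lt_card ?_)
  rw [ssubset_iff_of_subset]
  · refine ⟨j, mem_filter.2 ⟨hj, hrefl j hj⟩, fun hij => ?_⟩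
    exact hno j hj (mem_filter.1 hij).2 (hrefl j hj)
  · intro y hy
    obtain ⟨hyZ, hiy⟩ := mem_filter.1 hy
    exact mem_filter.2 ⟨hyZ, (hR y hyZ j hj).resolve_left (hno y hyZ hiy)⟩

section LinearBound

variable {m n ℓ K : ℕ} {A : MatN m n}

/-- The `2 × 3` matrix `H` of the theorem. -/
abbrev matH : MatN 2 3 := !![0, 1, 0; 0, 0, 1]

lemma injective_matH : Injective matH := by
  intro i j hij
  have h₁ := congrFun hij 1
  fin_cases i <;> fin_cases j <;> simp at h₁ ⊢

lemma simpleM_matH : SimpleM matH := by unfold SimpleM; decide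

lemma isConfig_matH {i j : Fin m} {c d e : Fin n} (hic : A i c = 0) (hjc : A j c = 0)
    (hid : A i d = 1) (hjd : A j d = 0) (hie : A i e = 0) (hje : A j e = 1) :
    IsConfig matH A := by
  refine isConfig_of_submatrix_eq injective_matH simpleM_matH (f := ![i, j]) (g := ![c, d, e]) ?_
  ext u v
  fin_cases u <;> fin_cases v <;> assumption

/-- Row `i` of `A` dominates row `j`: every column with a `0` in row `i` has an entry other than `1`
in row `j`. When `A` avoids `H`, this is a total relation on the zero rows of a column. -/
def Dominates (A : MatN m n) (i j : Fin m) : Prop := ∀ c, A i c = 0 → A j c ≠ 1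

lemma dominates_or_dominates (hH : ¬IsConfig matH A) {i j : Fin m} {c : Fin n} (hi : A i c = 0)
    (hj : A j c = 0) : Dominates A i j ∨ Dominates A j i := by
  by_contra! h
  simp only [Dominates] at h
  push Not at h
  obtain ⟨⟨e, hie, hje⟩, d, hjd, hid⟩ := h
  exact hH (isConfig_matH hi hj hid hjd hie hje)

/-- Row `i` is a king of column `c`: it has a `0` there, and reaches every other zero row of `c` in
at most two steps of `Dominates A` through zero rows of `c`. -/
def IsKing (A : MatN m n) (c : Fin n) (i : Fin m) : Prop :=
  A i c = 0 ∧ ∀ j, A j c = 0 → ∃ y, A y c = 0 ∧ Dominates A i y ∧ Dominates A y j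

lemma exists_isKing (hH : ¬IsConfig matH A) {c : Fin n} (hc : ∃ i, A i c = 0) :
    ∃ i, IsKing A c i := by
  obtain ⟨i, hi, hking⟩ := exists_king (Z := {i | A i c = 0}) (by simpa [Finset.Nonempty] using hc)
    (R := Dominates A) fun i hi j hj =>
      dominates_or_dominates hH (mem_filter.1 hi).2 (mem_filter.1 hj).2
  exact ⟨i, by simpa using hi, by simpa using hking⟩

/- On the rows dominated by `i`, columns with king `i` have at most `K` traces, and by the two-step
property no row contains a `0` and a `1` within the columns of a given trace. -/
lemma BoundedTraces.card_isKing_le (hK : BoundedTraces K A) (hA : SimpleM A) (i : Fin m)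
    [DecidablePred fun c => IsKing A c i] : #{c | IsKing A c i} ≤ K * K := by
  classical
  set X : Finset (Fin m) := {j | Dominates A i j}
  have htraces : #(({c | IsKing A c i} : Finset (Fin n)).image (colTrace A X)) ≤ K := by
    refine hK X _ fun j hj c _ d hd _ => ?_
    exact (mem_filter.1 hj).2 d (mem_filter.1 hd).2.1
  refine (card_le_mul_card_image _ K fun τ _ => ?_).trans (Nat.mul_le_mul_left K htraces)
  refine hK.card_le hA fun j c hc d hd hjc => ?_
  simp only [mem_filter, mem_univ, true_and] at hc hd
  obtain ⟨y, hyc, hiy, hyj⟩ := hc.1.2 j hjc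
  have hyd : A y d = A y c := congrFun (hd.2.trans hc.2.symm) ⟨y, by simpa [X] using hiy⟩
  exact hyj d (hyd.trans hyc)

lemma BoundedTraces.card_le_of_not_isConfig_matH (hK : BoundedTraces K A) (hA : SimpleM A)
    (hH : ¬IsConfig matH A) : n ≤ K + m * (K * K) := by
  classical
  let zeroFree : Finset (Fin n) := {c | ∀ i, A i c ≠ 0}
  let kingdom (i : Fin m) : Finset (Fin n) := {c | IsKing A c i}
  have hzero : #zeroFree ≤ K :=
    hK.card_le hA fun i c hc _ _ hic => absurd hic ((mem_filter.1 hc).2 i)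
  have hking : #(univ.biUnion kingdom) ≤ m * (K * K) := by
    simpa using card_biUnion_le_card_mul univ kingdom (K * K) fun i _ => hK.card_isKing_le hA i
  have hcover : zeroFree ∪ univ.biUnion kingdom = univ := by
    refine eq_univ_of_forall fun c => ?_
    rcases exists_or_forall_not (fun i => A i c = 0) with hc | hc
    · obtain ⟨i, hi⟩ := exists_isKing hH hc
      exact mem_union_right _ (mem_biUnion.2 ⟨i, mem_univ i, mem_filter.2 ⟨mem_univ c, hi⟩⟩)
    · exact mem_union_left _ (mem_filter.2 ⟨mem_univ c, hc⟩)
  calc n = #(zeroFree ∪ univ.biUnion kingdom) := by rw [hcover, card_fin]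
    _ ≤ #zeroFree + #(univ.biUnion kingdom) := card_union_le _ _
    _ ≤ K + m * (K * K) := Nat.add_le_add hzero hking

theorem exists_forb_matH_le (r : ℕ) (hℓ : 2 ≤ ℓ) :
    ∃ K : ℕ, ∀ m, forb m r ((TFam ℓ r \ TFam ℓ 2) ∪ {⟨2, 3, matH⟩}) ≤ K + m * (K * K) := by
  obtain ⟨K, hK⟩ := exists_boundedTraces r hℓ
  refine ⟨K, fun m => forb_le fun n A hr hA hav => ?_⟩
  have hbounded := hK m n A hr (hav.mono Set.subset_union_left)
  exact hbounded.card_le_of_not_isConfig_matH hA (hav ⟨2, 3, matH⟩ (Or.inr rfl))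

end LinearBound

section QuadraticBounds

variable {r ℓ t : ℕ}

theorem exists_forb_tcopies_matH_le (r t : ℕ) (hℓ : 2 ≤ ℓ) :
    ∃ C : ℕ, ∀ m, 1 ≤ m →
      forb m r ((TFam ℓ r \ TFam ℓ 2) ∪ {⟨2, t * 3, tcopies t matH⟩}) ≤ C * m ^ 2 := by
  obtain ⟨K, hK⟩ := exists_forb_matH_le r hℓ
  refine ⟨K + K * K + t, fun m hm => ?_⟩
  have hm₁ : 1 ≤ m ^ 2 := Nat.one_le_pow 2 m hm
  have hm₂ : m ≤ m ^ 2 := Nat.le_self_pow two_ne_zero m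
  calc forb m r ((TFam ℓ r \ TFam ℓ 2) ∪ {⟨2, t * 3, tcopies t matH⟩})
      ≤ K * 1 + m * (K * K) + m ^ 2 * t := by
        rw [mul_one]
        exact (forb_tcopies_le m r t simpleM_matH _).trans (Nat.add_le_add_right (hK m) _)
    _ ≤ K * m ^ 2 + m ^ 2 * (K * K) + m ^ 2 * t := by gcongr
    _ = (K + K * K + t) * m ^ 2 := by ring

open scoped Classical in
/-- The matrix whose columns are the `(0,1)`-columns with one or two zeros: the column indexed by
`s(i, i')` has its zeros in the rows `i` and `i'`, so the diagonal of `Sym2` gives those with a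
single zero. -/
noncomputable def zeroPairMat (m : ℕ) : MatN m (Fintype.card (Sym2 (Fin m))) :=
  fun i j => if i ∈ (Fintype.equivFin (Sym2 (Fin m))).symm j then 0 else 1

variable {m : ℕ}

lemma zeroPairMat_eq_zero {i : Fin m} {j : Fin (Fintype.card (Sym2 (Fin m)))} :
    zeroPairMat m i j = 0 ↔ i ∈ (Fintype.equivFin (Sym2 (Fin m))).symm j := by
  simp [zeroPairMat]

lemma rMat_zeroPairMat : RMat 2 (zeroPairMat m) := by
  intro i j
  unfold zeroPairMat
  split_ifs <;> norm_num

lemma simpleM_zeroPairMat : SimpleM (zeroPairMat m) := by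
  intro c d hcd
  refine (Fintype.equivFin _).symm.injective (Sym2.ext fun i => ?_)
  rw [← zeroPairMat_eq_zero, ← zeroPairMat_eq_zero, hcd i]

lemma not_isConfig_tcopies_matH_zeroPairMat (ht : 2 ≤ t) :
    ¬IsConfig (tcopies t matH) (zeroPairMat m) := by
  rintro ⟨f, g, hf, hg, hfg⟩
  have hpair : ∀ c, (∀ i, tcopies t matH i c = 0) →
      (Fintype.equivFin _).symm (g c) = s(f 0, f 1) := fun c hc =>
    (Sym2.mem_and_mem_iff (hf.ne zero_ne_one)).1
      ⟨zeroPairMat_eq_zero.1 ((hfg 0 c).trans (hc 0)),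
        zeroPairMat_eq_zero.1 ((hfg 1 c).trans (hc 1))⟩
  have h₀ := hpair ⟨0, by omega⟩ (by simp [tcopies, Fin.forall_fin_two])
  have h₃ := hpair ⟨3, by omega⟩ (by simp [tcopies, Fin.forall_fin_two])
  simpa using hg ((Fintype.equivFin _).symm.injective (h₀.trans h₃.symm))

lemma RMat.avoidsFam_TFam_diff {s n : ℕ} {A : MatN m n} (hA : RMat s A) (hℓ : 2 ≤ ℓ) :
    AvoidsFam A (TFam ℓ r \ TFam ℓ s) := by
  rintro M ⟨⟨a, b, -, -, hab, hM⟩, hMs⟩ ⟨f, g, -, -, hfg⟩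
  obtain ⟨i, j, j', rfl, rfl⟩ := exists_row_of_eq_imat_or_tmat hℓ hM
  exact hMs ⟨_, _, hfg i j ▸ hA _ _, hfg i j' ▸ hA _ _, hab, hM⟩

theorem choose_two_le_forb_tcopies_matH (m : ℕ) (hr : 2 ≤ r) (hℓ : 2 ≤ ℓ) (ht : 2 ≤ t) :
    (m + 1).choose 2 ≤ forb m r ((TFam ℓ r \ TFam ℓ 2) ∪ {⟨2, t * 3, tcopies t matH⟩}) := by
  rw [← Fintype.card_fin m, ← Sym2.card, Fintype.card_fin]
  refine le_forb (rMat_zeroPairMat.mono hr) simpleM_zeroPairMat ?_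
  rintro M (hM | rfl)
  · exact rMat_zeroPairMat.avoidsFam_TFam_diff hℓ M hM
  · exact not_isConfig_tcopies_matH_zeroPairMat ht

end QuadraticBounds

theorem stmt8_general (ℓ t r : ℕ) (hℓ : 2 ≤ ℓ) (ht : 2 ≤ t) (hr : 2 ≤ r) :
    ∃ c₁ c₂ : ℝ, 0 < c₁ ∧ 0 < c₂ ∧ ∀ m : ℕ, 1 ≤ m →
      c₁ * (m : ℝ) ^ 2 ≤
        (forb m r ((TFam ℓ r \ TFam ℓ 2) ∪
          {⟨2, t * 3, tcopies t !![0, 1, 0; 0, 0, 1]⟩}) : ℝ) ∧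
      (forb m r ((TFam ℓ r \ TFam ℓ 2) ∪
          {⟨2, t * 3, tcopies t !![0, 1, 0; 0, 0, 1]⟩}) : ℝ) ≤
        c₂ * (m : ℝ) ^ 2 := by
  obtain ⟨C, hC⟩ := exists_forb_tcopies_matH_le r t hℓ
  refine ⟨1 / 2, C + 1, by norm_num, by positivity, fun m hm => ⟨?_, ?_⟩⟩
  · calc (1 / 2 : ℝ) * m ^ 2 ≤ ((m + 1).choose 2 : ℕ) := by
          rw [Nat.cast_choose_two]
          push_cast
          linarith [m.cast_nonneg (α := ℝ)]
      _ ≤ _ := Nat.cast_le.2 (choose_two_le_forb_tcopies_matH m hr hℓ ht)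
  · calc _ ≤ ((C * m ^ 2 : ℕ) : ℝ) := Nat.cast_le.2 (hC m hm)
      _ ≤ (C + 1) * (m : ℝ) ^ 2 := by push_cast; gcongr; linarith

/-- For `ℓ ≥ 2`, `t ≥ 2` and `H` the `2×3` matrix with rows `[0 1 0]`,
`[0 0 1]`, `forb(m, 3, (𝒯_ℓ(3) \ 𝒯_ℓ(2)) ∪ {t·H})` is `Θ(m²)`. -/
theorem stmt8 (ℓ t : ℕ) (hℓ : 2 ≤ ℓ) (ht : 2 ≤ t) :
    ∃ c₁ c₂ : ℝ, 0 < c₁ ∧ 0 < c₂ ∧ ∀ m : ℕ, 1 ≤ m →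
      c₁ * (m : ℝ) ^ 2 ≤
        (forb m 3 ((TFam ℓ 3 \ TFam ℓ 2) ∪
          {⟨2, t * 3, tcopies t !![0, 1, 0; 0, 0, 1]⟩}) : ℝ) ∧
      (forb m 3 ((TFam ℓ 3 \ TFam ℓ 2) ∪
          {⟨2, t * 3, tcopies t !![0, 1, 0; 0, 0, 1]⟩}) : ℝ) ≤
        c₂ * (m : ℝ) ^ 2 :=
  stmt8_general ℓ t 3 hℓ ht (by norm_num)
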